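/- Minimum communication cost under a limited-knowledge adversary (cost part of Theorem 1): let S and downloads Y_1, …, Y_d be random variables on a common probability space taking values in finite sets, let z_ro, z_wo, z_rw ≥ 0 and k ≤ d be integers with d > 2z_rw + 2z_wo + z_ro, set z_r = z_ro + z_rw and z_w = z_wo + z_rw, and let α, β ≥ 0 be reals. Suppose H(Y_i) ≤ β for every i, H(S | Y_Z) = H(S) for every Z ⊆ {1,…,d} with |Z| = z_r, H(S | Y_B) = 0 for every B ⊆ {1,…,d} with |B| = d − z_w, and H(S) = (k − 2z_rw − z_wo − z_ro)·α. Then the total download satisfies d·β ≥ d·(k − 2z_rw − z_wo − z_ro)·α / (d − 2z_rw − z_wo − z_ro). -/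

import Mathlib

open Finset

/-- The probability that the random variable `X` takes the value `a`, under the
probability mass function `p` on the finite sample space `Ω`. -/
noncomputable def probOf {Ω : Type*} [Fintype Ω] (p : Ω → ℝ) {A : Type*} [DecidableEq A]
    (X : Ω → A) (a : A) : ℝ :=
  ∑ ω ∈ Finset.univ.filter fun ω => X ω = a, p ω

/-- Shannon entropy of the random variable `X` with logarithm base `b`. -/
noncomputable def entropy {Ω : Type*} [Fintype Ω] (b : ℝ) (p : Ω → ℝ) {A : Type*}
    [Fintype A] [DecidableEq A] (X : Ω → A) : ℝ :=
  -∑ a : A, probOf p X a * Real.logb b (probOf p X a)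

/-- Conditional Shannon entropy `H(X | Y)` with logarithm base `b`,
defined by the chain rule `H(X | Y) = H(X, Y) - H(Y)`. -/
noncomputable def condEntropy {Ω : Type*} [Fintype Ω] (b : ℝ) (p : Ω → ℝ) {A B : Type*}
    [Fintype A] [DecidableEq A] [Fintype B] [DecidableEq B] (X : Ω → A) (Y : Ω → B) : ℝ :=
  entropy b p (fun ω => (X ω, Y ω)) - entropy b p Y

/-- The tuple `X_A = (X_i)_{i ∈ A}` of a family of random variables. -/
def tupleOn {Ω : Type*} {N : ℕ} {V : Fin N → Type*} (X : ∀ i, Ω → V i) (A : Finset (Fin N)) :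
    Ω → ∀ i : A, V i :=
  fun ω i => X i ω

/-!
Take disjoint sets `Z` and `U` of parties with `|Z| = z_r` and `|Z ∪ U| = d - z_w`. The downloads
`Y_Z` say nothing about `S` while `Y_{Z ∪ U}` determine it, so
`H(S) ≤ H(Y_{Z ∪ U}) - H(Y_Z) ≤ ∑_{i ∈ U} H(Y_i)`. Since `U` can be any set of
`d - z_w - z_r = d - 2z_rw - z_wo - z_ro` parties, averaging over the cyclic shifts of one such set
bounds the total download `∑_i H(Y_i)` from below, however it is divided among the parties.
-/

lemma card_nsmul_le_nsmul_sum_of_forall_card_eq {ι M : Type*} [Fintype ι] [AddCommMonoid M]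
    [PartialOrder M] [IsOrderedAddMonoid M] {n : ℕ} (hn : n ≤ Fintype.card ι) (f : ι → M) (c : M)
    (hc : ∀ U : Finset ι, #U = n → c ≤ ∑ i ∈ U, f i) :
    Fintype.card ι • c ≤ n • ∑ i, f i := by
  rcases isEmpty_or_nonempty ι with _ | _
  · simp
  -- The translates of one `n`-element set under any group structure on `ι` cover each point
  -- exactly `n` times.
  obtain ⟨_⟩ := nonempty_commRing ι
  obtain ⟨U, -, hU⟩ := exists_subset_card_eq (s := (univ : Finset ι)) hn
  calc Fintype.card ι • c = ∑ _g : ι, c := by simp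
    _ ≤ ∑ g, ∑ i ∈ U, f (g + i) := sum_le_sum fun g _ => by
        simpa using hc (U.map (addLeftEmbedding g)) (by rw [card_map, hU])
    _ = ∑ i ∈ U, ∑ g, f (g + i) := sum_comm
    _ = ∑ _i ∈ U, ∑ g, f g := sum_congr rfl fun i _ => Equiv.sum_comp (Equiv.addRight i) f
    _ = n • ∑ g, f g := by rw [sum_const, hU]

lemma sum_mul_logb_le_sum_mul_logb_self {ι : Type*} {b : ℝ} (hb : 1 < b) (s : Finset ι)
    {u v : ι → ℝ} (hu : ∀ i ∈ s, 0 ≤ u i) (hv : ∀ i ∈ s, 0 ≤ v i)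
    (huv : ∀ i ∈ s, v i = 0 → u i = 0) (hsum : ∑ i ∈ s, v i ≤ ∑ i ∈ s, u i) :
    ∑ i ∈ s, u i * Real.logb b (v i) ≤ ∑ i ∈ s, u i * Real.logb b (u i) := by
  have hterm : ∀ i ∈ s, u i * Real.log (v i) - u i * Real.log (u i) ≤ v i - u i := by
    intro i hi
    rcases (hu i hi).eq_or_lt with hui | hui
    · simpa [← hui] using hv i hi
    have hvi : 0 < v i := (hv i hi).lt_of_ne' fun h => hui.ne' (huv i hi h)
    calc u i * Real.log (v i) - u i * Real.log (u i) = u i * Real.log (v i / u i) := by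
          rw [Real.log_div hvi.ne' hui.ne', mul_sub]
      _ ≤ u i * (v i / u i - 1) :=
          mul_le_mul_of_nonneg_left (Real.log_le_sub_one_of_pos (div_pos hvi hui)) hui.le
      _ = v i - u i := by field_simp
  have hlog : ∑ i ∈ s, u i * Real.log (v i) ≤ ∑ i ∈ s, u i * Real.log (u i) := by
    have h := sum_le_sum hterm
    simp only [sum_sub_distrib] at h
    linarith
  simpa only [Real.logb, mul_div_assoc', ← sum_div] using
    div_le_div_of_nonneg_right hlog (Real.log_pos hb).le

section Entropy

variable {Ω A B : Type*} [Fintype Ω] {b : ℝ} {p : Ω → ℝ} [DecidableEq A] [DecidableEq B]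

lemma probOf_nonneg (hp : ∀ ω, 0 ≤ p ω) (X : Ω → A) (a : A) : 0 ≤ probOf p X a :=
  sum_nonneg fun ω _ => hp ω

lemma le_probOf_self (hp : ∀ ω, 0 ≤ p ω) (X : Ω → A) (ω : Ω) : p ω ≤ probOf p X (X ω) :=
  single_le_sum (f := p) (fun ω _ => hp ω) (by simp)

lemma probOf_self_le_probOf_self_of_factorsThrough (hp : ∀ ω, 0 ≤ p ω) {X : Ω → A} {Y : Ω → B}
    (h : X.FactorsThrough Y) (ω : Ω) : probOf p Y (Y ω) ≤ probOf p X (X ω) :=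
  sum_le_sum_of_subset_of_nonneg (monotone_filter_right _ fun _ _ hY => h hY) fun ω _ _ => hp ω

lemma sum_probOf_mul [Fintype A] (p : Ω → ℝ) (X : Ω → A) (g : A → ℝ) :
    ∑ a, probOf p X a * g a = ∑ ω, p ω * g (X ω) := by
  rw [← sum_fiberwise (s := univ) (g := X)]
  refine sum_congr rfl fun a _ => ?_
  rw [probOf, sum_mul]
  refine sum_congr rfl fun ω hω => ?_
  rw [(mem_filter.mp hω).2]

lemma sum_probOf [Fintype A] (p : Ω → ℝ) (X : Ω → A) : ∑ a, probOf p X a = ∑ ω, p ω := by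
  simpa using sum_probOf_mul p X fun _ => 1

lemma entropy_eq_neg_sum [Fintype A] (b : ℝ) (p : Ω → ℝ) (X : Ω → A) :
    entropy b p X = -∑ ω, p ω * Real.logb b (probOf p X (X ω)) := by
  rw [entropy, sum_probOf_mul p X fun a => Real.logb b (probOf p X a)]

lemma entropy_le_of_factorsThrough [Fintype A] [Fintype B] (hb : 1 < b) (hp : ∀ ω, 0 ≤ p ω)
    {X : Ω → A} {Y : Ω → B} (h : X.FactorsThrough Y) : entropy b p X ≤ entropy b p Y := by
  rw [entropy_eq_neg_sum, entropy_eq_neg_sum]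
  refine neg_le_neg (sum_le_sum fun ω _ => ?_)
  rcases (hp ω).eq_or_lt with hω | hω
  · simp [← hω]
  · exact mul_le_mul_of_nonneg_left (Real.logb_le_logb_of_le hb
      (hω.trans_le (le_probOf_self hp Y ω))
      (probOf_self_le_probOf_self_of_factorsThrough hp h ω)) hω.le

lemma sum_mul_logb_probOf_mul_probOf [Fintype A] [Fintype B] (hp : ∀ ω, 0 ≤ p ω)
    (X : Ω → A) (Y : Ω → B) :
    ∑ ω, p ω * Real.logb b (probOf p X (X ω) * probOf p Y (Y ω)) =
      -(entropy b p X + entropy b p Y) := by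
  rw [entropy_eq_neg_sum, entropy_eq_neg_sum, ← neg_add, neg_neg, ← sum_add_distrib]
  refine sum_congr rfl fun ω _ => ?_
  rcases (hp ω).eq_or_lt with hω | hω
  · simp [← hω]
  · rw [Real.logb_mul (hω.trans_le (le_probOf_self hp X ω)).ne'
      (hω.trans_le (le_probOf_self hp Y ω)).ne', mul_add]

lemma probOf_prodMk_eq_zero_of_mul_eq_zero (hp : ∀ ω, 0 ≤ p ω) (X : Ω → A) (Y : Ω → B)
    (c : A × B) (hc : probOf p X c.1 * probOf p Y c.2 = 0) :
    probOf p (fun ω => (X ω, Y ω)) c = 0 := by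
  refine sum_eq_zero fun ω hω => ?_
  obtain rfl : (X ω, Y ω) = c := (mem_filter.mp hω).2
  rcases mul_eq_zero.mp hc with h | h
  · exact le_antisymm (h ▸ le_probOf_self hp X ω) (hp ω)
  · exact le_antisymm (h ▸ le_probOf_self hp Y ω) (hp ω)

lemma entropy_prodMk_le_add [Fintype A] [Fintype B] (hb : 1 < b) (hp : ∀ ω, 0 ≤ p ω)
    (hp1 : ∑ ω, p ω = 1) (X : Ω → A) (Y : Ω → B) :
    entropy b p (fun ω => (X ω, Y ω)) ≤ entropy b p X + entropy b p Y := by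
  set W : Ω → A × B := fun ω => (X ω, Y ω)
  have hmass : ∑ c : A × B, probOf p X c.1 * probOf p Y c.2 = ∑ c, probOf p W c := by
    rw [Fintype.sum_prod_type, ← sum_mul_sum, sum_probOf, sum_probOf, sum_probOf, hp1, one_mul]
  have hgibbs := sum_mul_logb_le_sum_mul_logb_self hb univ
    (fun c _ => probOf_nonneg hp W c)
    (fun c _ => mul_nonneg (probOf_nonneg hp X c.1) (probOf_nonneg hp Y c.2))
    (fun c _ => probOf_prodMk_eq_zero_of_mul_eq_zero hp X Y c) hmass.le
  rw [sum_probOf_mul p W fun c => Real.logb b (probOf p X c.1 * probOf p Y c.2),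
    sum_mul_logb_probOf_mul_probOf hp X Y] at hgibbs
  exact neg_le.mp hgibbs

lemma entropy_le_sub_of_condEntropy_eq {C : Type*} [Fintype A] [Fintype B] [Fintype C]
    [DecidableEq C] (hb : 1 < b) (hp : ∀ ω, 0 ≤ p ω) {S : Ω → A} {Z : Ω → B} {W : Ω → C}
    (hZW : Z.FactorsThrough W) (hZ : condEntropy b p S Z = entropy b p S)
    (hW : condEntropy b p S W = 0) :
    entropy b p S ≤ entropy b p W - entropy b p Z := by
  have hmono : entropy b p (fun ω => (S ω, Z ω)) ≤ entropy b p (fun ω => (S ω, W ω)) :=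
    entropy_le_of_factorsThrough hb hp fun _ _ h =>
      Prod.ext (Prod.mk.inj h).1 (hZW (Prod.mk.inj h).2)
  unfold condEntropy at hZ hW
  linarith

end Entropy

section Tuples

variable {Ω : Type*} {N : ℕ} {V : Fin N → Type*}

lemma tupleOn_factorsThrough_of_subset (X : ∀ i, Ω → V i) {T U : Finset (Fin N)} (h : T ⊆ U) :
    (tupleOn X T).FactorsThrough (tupleOn X U) :=
  fun _ _ hU => congrArg (restrict₂ h) hU

lemma tupleOn_insert_factorsThrough (X : ∀ i, Ω → V i) (i : Fin N) (T : Finset (Fin N)) :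
    (tupleOn X (insert i T)).FactorsThrough fun ω => (X i ω, tupleOn X T ω) := by
  rintro ω ω' h
  obtain ⟨hi, hT⟩ := Prod.mk.inj h
  funext ⟨j, hj⟩
  rcases mem_insert.mp hj with rfl | hjT
  · exact hi
  · exact congrFun hT ⟨j, hjT⟩

variable [Fintype Ω] {b : ℝ} {p : Ω → ℝ} [∀ i, Fintype (V i)] [∀ i, DecidableEq (V i)]
  {σ : Type*} [Fintype σ] [DecidableEq σ]

lemma entropy_tupleOn_union_le (hb : 1 < b) (hp : ∀ ω, 0 ≤ p ω) (hp1 : ∑ ω, p ω = 1)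
    (X : ∀ i, Ω → V i) (U Z : Finset (Fin N)) :
    entropy b p (tupleOn X (U ∪ Z)) ≤ ∑ i ∈ U, entropy b p (X i) + entropy b p (tupleOn X Z) := by
  induction U using Finset.induction_on with
  | empty => rw [empty_union, sum_empty, zero_add]
  | insert i U hi ih =>
    rw [insert_union, sum_insert hi, add_assoc]
    calc entropy b p (tupleOn X (insert i (U ∪ Z)))
        ≤ entropy b p (fun ω => (X i ω, tupleOn X (U ∪ Z) ω)) :=
          entropy_le_of_factorsThrough hb hp (tupleOn_insert_factorsThrough X i (U ∪ Z))
      _ ≤ entropy b p (X i) + entropy b p (tupleOn X (U ∪ Z)) :=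
          entropy_prodMk_le_add hb hp hp1 _ _
      _ ≤ _ := add_le_add_right ih _

lemma entropy_le_sum_of_condEntropy_tupleOn_eq (hb : 1 < b) (hp : ∀ ω, 0 ≤ p ω)
    (hp1 : ∑ ω, p ω = 1) (S : Ω → σ) (X : ∀ i, Ω → V i) {U Z : Finset (Fin N)}
    (hpriv : condEntropy b p S (tupleOn X Z) = entropy b p S)
    (hdec : condEntropy b p S (tupleOn X (U ∪ Z)) = 0) :
    entropy b p S ≤ ∑ i ∈ U, entropy b p (X i) :=
  (entropy_le_sub_of_condEntropy_eq hb hp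
    (tupleOn_factorsThrough_of_subset X subset_union_right) hpriv hdec).trans
    (sub_le_iff_le_add.mpr (entropy_tupleOn_union_le hb hp hp1 X U Z))

lemma nsmul_entropy_le_nsmul_sum_entropy (hb : 1 < b) (hp : ∀ ω, 0 ≤ p ω)
    (hp1 : ∑ ω, p ω = 1) (S : Ω → σ) (X : ∀ i, Ω → V i) {n r : ℕ} (hnr : n + r ≤ N)
    (hpriv : ∀ Z : Finset (Fin N), #Z = r → condEntropy b p S (tupleOn X Z) = entropy b p S)
    (hdec : ∀ B : Finset (Fin N), #B = n + r → condEntropy b p S (tupleOn X B) = 0) :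
    N • entropy b p S ≤ n • ∑ i, entropy b p (X i) := by
  have hsum : ∀ U : Finset (Fin N), #U = n → entropy b p S ≤ ∑ i ∈ U, entropy b p (X i) := by
    intro U hU
    obtain ⟨Z, hZU, hZ⟩ : ∃ Z ⊆ Uᶜ, #Z = r :=
      exists_subset_card_eq (by rw [card_compl, Fintype.card_fin, hU]; omega)
    have hcard : #(U ∪ Z) = n + r := by
      rw [card_union_of_disjoint (disjoint_compl_right.mono_right hZU), hU, hZ]
    exact entropy_le_sum_of_condEntropy_tupleOn_eq hb hp hp1 S X (hpriv Z hZ) (hdec _ hcard)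
  simpa only [Fintype.card_fin] using
    card_nsmul_le_nsmul_sum_of_forall_card_eq (by rw [Fintype.card_fin]; omega) _ _ hsum

end Tuples

theorem limited_knowledge_min_communication_cost_general
    {Ω : Type*} [Fintype Ω] {b : ℝ} (hb : 1 < b)
    {p : Ω → ℝ} (hp : ∀ ω, 0 ≤ p ω) (hp1 : ∑ ω, p ω = 1)
    {σ : Type*} [Fintype σ] [DecidableEq σ] (S : Ω → σ)
    {d zro zwo zrw : ℕ} (hd : 2 * zrw + zwo + zro < d)
    {V : Fin d → Type*} [∀ i, Fintype (V i)] [∀ i, DecidableEq (V i)] (Y : ∀ i, Ω → V i)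
    (hpriv : ∀ Z : Finset (Fin d), #Z = zro + zrw →
      condEntropy b p S (tupleOn Y Z) = entropy b p S)
    (hdec : ∀ B : Finset (Fin d), #B = d - (zwo + zrw) → condEntropy b p S (tupleOn Y B) = 0) :
    (d : ℝ) * entropy b p S / ((d : ℝ) - 2 * (zrw : ℝ) - (zwo : ℝ) - (zro : ℝ)) ≤
      ∑ i, entropy b p (Y i) := by
  obtain ⟨n, rfl⟩ := Nat.exists_eq_add_of_lt hd
  have hgap : ((2 * zrw + zwo + zro + n + 1 : ℕ) : ℝ) - 2 * zrw - zwo - zro = (n + 1 : ℕ) := by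
    push_cast
    ring
  have hbound := nsmul_entropy_le_nsmul_sum_entropy hb hp hp1 S Y (n := n + 1) (by omega) hpriv
    fun B hB => hdec B (by omega)
  rw [hgap, div_le_iff₀' (by positivity)]
  simpa only [nsmul_eq_mul] using hbound

/-- Minimum communication cost under a limited-knowledge adversary (cost part of
Theorem 1): if each download `Y_i` has entropy at most `β`, any `z_r` downloads
are independent of the secret, the user can decode from any `d - z_w` downloads,
and the secret has the capacity-achieving size `(k - 2z_rw - z_wo - z_ro)·α`,
then `d·β ≥ d·(k - 2z_rw - z_wo - z_ro)·α / (d - 2z_rw - z_wo - z_ro)`. -/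
theorem limited_knowledge_min_communication_cost
    {Ω : Type*} [Fintype Ω] (b : ℝ) (hb : 1 < b)
    (p : Ω → ℝ) (hp : ∀ ω, 0 ≤ p ω) (hp1 : ∑ ω, p ω = 1)
    {σ : Type*} [Fintype σ] [DecidableEq σ] (S : Ω → σ)
    (d k zro zwo zrw : ℕ) (hkd : k ≤ d) (hd : 2 * zrw + 2 * zwo + zro < d)
    {V : Fin d → Type*} [∀ i, Fintype (V i)] [∀ i, DecidableEq (V i)]
    (Y : ∀ i, Ω → V i)
    (α β : ℝ) (hα : 0 ≤ α) (hβ : 0 ≤ β)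
    (hdl : ∀ i, entropy b p (Y i) ≤ β)
    (hpriv : ∀ Z : Finset (Fin d), Z.card = zro + zrw →
      condEntropy b p S (tupleOn Y Z) = entropy b p S)
    (hdec : ∀ B : Finset (Fin d), B.card = d - (zwo + zrw) →
      condEntropy b p S (tupleOn Y B) = 0)
    (hS : entropy b p S = ((k : ℝ) - 2 * (zrw : ℝ) - (zwo : ℝ) - (zro : ℝ)) * α) :
    (d : ℝ) * β ≥
      (d : ℝ) * (((k : ℝ) - 2 * (zrw : ℝ) - (zwo : ℝ) - (zro : ℝ)) * α) /
        ((d : ℝ) - 2 * (zrw : ℝ) - (zwo : ℝ) - (zro : ℝ)) := by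
  calc (d : ℝ) * (((k : ℝ) - 2 * zrw - zwo - zro) * α) / ((d : ℝ) - 2 * zrw - zwo - zro)
      ≤ ∑ i, entropy b p (Y i) :=
        hS ▸ limited_knowledge_min_communication_cost_general hb hp hp1 S (by omega) Y hpriv hdec
    _ ≤ d * β := by simpa using sum_le_card_nsmul univ _ β fun i _ => hdl i
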